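/- Let L be a free ℤ-module of finite rank and let E be any set of ℤ-linear endomorphisms of L. For m ≥ 1 let a_m denote the number of ℤ-submodules H of L such that L/H has cardinality m and φ(H) ⊆ H for all φ ∈ E. Then for all coprime positive integers m₁ and m₂, a_{m₁m₂} = a_{m₁}·a_{m₂}. -/

import Mathlib

/-- The number of `E`-stable finite-index submodules of `L` of index `m`. -/
noncomputable def stableSubmoduleCount (L : Type) [AddCommGroup L] [Module ℤ L]
    (E : Set (Module.End ℤ L)) (m : ℕ) : ℕ :=
  Nat.card {H : Submodule ℤ L //
    Nat.card (L ⧸ H) = m ∧ ∀ φ ∈ E, ∀ x ∈ H, φ x ∈ H}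

section Helpers

variable {L : Type} [AddCommGroup L] [Module ℤ L]

theorem aux_smul_mem (H : Submodule ℤ L) {m : ℕ} (h : Nat.card (L ⧸ H) = m) (x : L) :
    m • x ∈ H := by
  rw [← Submodule.Quotient.mk_eq_zero, Submodule.Quotient.mk_smul, ← h]
  exact card_nsmul_eq_zero'

theorem aux_mem_of_coprime (H : Submodule ℤ L) {m n : ℕ} (hco : Nat.Coprime m n) {x : L}
    (hm : m • x ∈ H) (hn : n • x ∈ H) : x ∈ H := by
  have hb := Nat.gcd_eq_gcd_ab m n
  rw [hco.gcd_eq_one] at hb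
  have h1 : (Nat.gcdA m n) • (m • x) + (Nat.gcdB m n) • (n • x) = x := by
    rw [← natCast_zsmul x m, ← natCast_zsmul x n, ← mul_zsmul', ← mul_zsmul', ← add_zsmul,
      ← hb]
    simp
  rw [← h1]
  exact H.add_mem (zsmul_mem hm _) (zsmul_mem hn _)

/-- The submodule of elements whose `n`-th multiple lies in `H`. -/
def auxDiv (H : Submodule ℤ L) (n : ℕ) : Submodule ℤ L where
  carrier := {x | n • x ∈ H}
  add_mem' := by
    intro a b ha hb
    simp only [Set.mem_ofPred_eq, nsmul_add] at *
    exact H.add_mem ha hb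
  zero_mem' := by simp
  smul_mem' := by
    intro c x hx
    simp only [Set.mem_ofPred_eq] at *
    rw [smul_comm]
    exact H.smul_mem c hx

theorem aux_mem_div (H : Submodule ℤ L) (n : ℕ) (x : L) : x ∈ auxDiv H n ↔ n • x ∈ H := Iff.rfl

theorem aux_card (H : Submodule ℤ L) : Nat.card (L ⧸ H) = H.toAddSubgroup.index := rfl

theorem aux_card_dvd {H K : Submodule ℤ L} (h : H ≤ K) :
    Nat.card (L ⧸ K) ∣ Nat.card (L ⧸ H) := by
  rw [aux_card, aux_card]
  exact AddSubgroup.index_dvd_of_le (H := H.toAddSubgroup) (K := K.toAddSubgroup) h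

theorem aux_card_inf_le (H K : Submodule ℤ L) :
    Nat.card (L ⧸ (H ⊓ K)) ≤ Nat.card (L ⧸ H) * Nat.card (L ⧸ K) := by
  simp only [aux_card]
  exact AddSubgroup.index_inf_le (H := H.toAddSubgroup) (K := K.toAddSubgroup)

theorem aux_card_inf_ne_zero (H K : Submodule ℤ L) (h : Nat.card (L ⧸ H) ≠ 0)
    (k : Nat.card (L ⧸ K) ≠ 0) : Nat.card (L ⧸ (H ⊓ K)) ≠ 0 := by
  rw [aux_card] at h k ⊢
  exact AddSubgroup.index_inf_ne_zero (H := H.toAddSubgroup) (K := K.toAddSubgroup) h k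

theorem aux_card_inf (H K : Submodule ℤ L) (h : Nat.card (L ⧸ H) ≠ 0)
    (k : Nat.card (L ⧸ K) ≠ 0) (hco : Nat.Coprime (Nat.card (L ⧸ H)) (Nat.card (L ⧸ K))) :
    Nat.card (L ⧸ (H ⊓ K)) = Nat.card (L ⧸ H) * Nat.card (L ⧸ K) :=
  le_antisymm (aux_card_inf_le H K)
    (Nat.le_of_dvd (Nat.pos_of_ne_zero (aux_card_inf_ne_zero H K h k))
      (hco.mul_dvd_of_dvd_of_dvd (aux_card_dvd inf_le_left) (aux_card_dvd inf_le_right)))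

theorem aux_div_inf (H : Submodule ℤ L) {m n : ℕ} (hco : Nat.Coprime m n) :
    auxDiv H n ⊓ auxDiv H m = H := by
  ext x
  simp only [Submodule.mem_inf, aux_mem_div]
  constructor
  · rintro ⟨a, b⟩
    exact aux_mem_of_coprime H hco b a
  · intro h
    exact ⟨nsmul_mem h _, nsmul_mem h _⟩

theorem aux_card_div_dvd (H : Submodule ℤ L) {m n : ℕ} (hm : 0 < m) (hn : 0 < n)
    (hco : Nat.Coprime m n) (h : Nat.card (L ⧸ H) = m * n) :
    Nat.card (L ⧸ auxDiv H n) ∣ m := by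
  have hle : H ≤ auxDiv H n := fun x hx => (aux_mem_div H n x).2 (nsmul_mem hx _)
  have hd : Nat.card (L ⧸ auxDiv H n) ∣ m * n := h ▸ aux_card_dvd hle
  have hne : Nat.card (L ⧸ auxDiv H n) ≠ 0 := fun h0 => by
    rw [h0, zero_dvd_iff] at hd
    exact (Nat.mul_pos hm hn).ne' hd
  have hfin : Finite (L ⧸ auxDiv H n) := Nat.finite_of_card_ne_zero hne
  refine Nat.Coprime.dvd_of_dvd_mul_right ?_ hd
  refine Nat.Coprime.symm (Nat.coprime_of_dvd ?_)
  intro p hp hpn hpc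
  have : Fact p.Prime := ⟨hp⟩
  obtain ⟨x, hx⟩ := exists_prime_addOrderOf_dvd_card' p hpc
  have hpm : p ∣ m := by
    rw [← hx]
    apply addOrderOf_dvd_of_nsmul_eq_zero
    obtain ⟨y, rfl⟩ := Submodule.Quotient.mk_surjective _ x
    rw [← Submodule.Quotient.mk_smul, Submodule.Quotient.mk_eq_zero, aux_mem_div, smul_smul,
      mul_comm]
    exact aux_smul_mem H h y
  exact Nat.Prime.not_coprime_iff_dvd.2 ⟨p, hp, hpm, hpn⟩ hco

theorem aux_card_div (H : Submodule ℤ L) {m n : ℕ} (hm : 0 < m) (hn : 0 < n)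
    (hco : Nat.Coprime m n) (h : Nat.card (L ⧸ H) = m * n) :
    Nat.card (L ⧸ auxDiv H n) = m := by
  have h1 := Nat.le_of_dvd hm (aux_card_div_dvd H hm hn hco h)
  have h2 := Nat.le_of_dvd hn (aux_card_div_dvd H hn hm hco.symm (h.trans (mul_comm _ _)))
  have h3 := aux_card_inf_le (auxDiv H n) (auxDiv H m)
  rw [aux_div_inf H hco, h] at h3
  refine le_antisymm h1 ?_
  exact Nat.le_of_mul_le_mul_right (h3.trans (Nat.mul_le_mul_left _ h2)) hn

theorem aux_div_of_inf (H K : Submodule ℤ L) {m n : ℕ} (hco : Nat.Coprime m n)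
    (h : Nat.card (L ⧸ H) = m) (k : Nat.card (L ⧸ K) = n) : auxDiv (H ⊓ K) n = H := by
  ext x
  simp only [Submodule.mem_inf, aux_mem_div]
  exact ⟨fun hx => aux_mem_of_coprime H hco (aux_smul_mem H h x) hx.1,
    fun hx => ⟨nsmul_mem hx _, aux_smul_mem K k x⟩⟩

theorem aux_div_stable (E : Set (Module.End ℤ L)) (H : Submodule ℤ L) (n : ℕ)
    (h : ∀ φ ∈ E, ∀ x ∈ H, φ x ∈ H) : ∀ φ ∈ E, ∀ x ∈ auxDiv H n, φ x ∈ auxDiv H n := by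
  intro φ hφ x hx
  rw [aux_mem_div] at *
  rw [← map_nsmul]
  exact h φ hφ _ hx

end Helpers

/-- Let `L` be a free `ℤ`-module of finite rank and `E` any set of
`ℤ`-linear endomorphisms of `L`.  For `m ≥ 1` let `a m` be the number of
submodules `H ≤ L` with `|L/H| = m` and `φ(H) ⊆ H` for all `φ ∈ E`.  Then
for coprime positive integers `m₁, m₂`, `a (m₁ m₂) = a m₁ · a m₂`. -/
theorem stableSubmoduleCount_multiplicative (L : Type) [AddCommGroup L] [Module ℤ L]
    [Module.Free ℤ L] [Module.Finite ℤ L] (E : Set (Module.End ℤ L))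
    (m₁ m₂ : ℕ) (h₁ : 0 < m₁) (h₂ : 0 < m₂) (hco : Nat.Coprime m₁ m₂) :
    stableSubmoduleCount L E (m₁ * m₂)
      = stableSubmoduleCount L E m₁ * stableSubmoduleCount L E m₂ := by
  unfold stableSubmoduleCount
  rw [← Nat.card_prod]
  refine Nat.card_congr
    { toFun := fun H => (⟨auxDiv H.1 m₂, aux_card_div H.1 h₁ h₂ hco H.2.1,
          aux_div_stable E H.1 m₂ H.2.2⟩,
        ⟨auxDiv H.1 m₁, aux_card_div H.1 h₂ h₁ hco.symm (H.2.1.trans (mul_comm _ _)),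
          aux_div_stable E H.1 m₁ H.2.2⟩)
      invFun := fun P => ⟨P.1.1 ⊓ P.2.1, ?_, fun φ hφ x hx =>
        ⟨P.1.2.2 φ hφ x hx.1, P.2.2.2 φ hφ x hx.2⟩⟩
      left_inv := ?_
      right_inv := ?_ }
  · obtain ⟨⟨H, hH, _⟩, ⟨K, hK, _⟩⟩ := P
    have := aux_card_inf H K (by omega) (by omega) (by rw [hH, hK]; exact hco)
    rw [hH, hK] at this
    exact this
  · intro H
    exact Subtype.ext (aux_div_inf H.1 hco)
  · rintro ⟨⟨H, hH, _⟩, ⟨K, hK, _⟩⟩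
    refine Prod.ext (Subtype.ext ?_) (Subtype.ext ?_)
    · exact aux_div_of_inf H K hco hH hK
    · change auxDiv (H ⊓ K) m₁ = K
      rw [inf_comm]
      exact aux_div_of_inf K H hco.symm hK hH
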